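/- Let C be a category with pullbacks which has Kähler differentials, and let X be an object of C. If Ω_X is a zero object in Ab(C/X), then X is formally unramified. -/

import Mathlib

open CategoryTheory CategoryTheory.Limits

universe v u

/-- A Beck module over `Y`: an abelian group object in the overcategory `C/Y`,
presented by its underlying morphism `φ : M ⟶ Y`, a unit (zero) section `unit`,
an addition `add` over `Y`, and a negation `neg` over `Y`, satisfying the abelian
group axioms on generalized elements (equivalently, via Yoneda, making it an
abelian group object of `C/Y`). -/
structure BeckModule {C : Type u} [Category.{v} C] [HasPullbacks C] (Y : C) where
  M : C
  φ : M ⟶ Y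
  unit : Y ⟶ M
  unit_φ : unit ≫ φ = 𝟙 Y
  add : pullback φ φ ⟶ M
  add_φ : add ≫ φ = pullback.fst φ φ ≫ φ
  neg : M ⟶ M
  neg_φ : neg ≫ φ = φ
  add_assoc : ∀ {T : C} (a b c : T ⟶ M) (hab : a ≫ φ = b ≫ φ) (hbc : b ≫ φ = c ≫ φ),
    pullback.lift (pullback.lift a b hab ≫ add) c
        (by rw [Category.assoc, add_φ, ← Category.assoc, pullback.lift_fst, hab, hbc]) ≫ add =
      pullback.lift a (pullback.lift b c hbc ≫ add)
        (by rw [Category.assoc, add_φ, ← Category.assoc, pullback.lift_fst, hab]) ≫ add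
  add_comm : ∀ {T : C} (a b : T ⟶ M) (h : a ≫ φ = b ≫ φ),
    pullback.lift a b h ≫ add = pullback.lift b a h.symm ≫ add
  zero_add : ∀ {T : C} (a : T ⟶ M),
    pullback.lift (a ≫ φ ≫ unit) a
        (by rw [Category.assoc, Category.assoc, unit_φ, Category.comp_id]) ≫ add = a
  add_neg : ∀ {T : C} (a : T ⟶ M),
    pullback.lift a (a ≫ neg) (by rw [Category.assoc, neg_φ]) ≫ add = a ≫ φ ≫ unit

/-- A Beck torsor structure on `γ : Z ⟶ Y`: `γ` is an effective epimorphism, equipped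
with a Beck module `mod` over `Y` and a group action `τ : M ×_Y Z ⟶ Z` in `C/Y`
(satisfying the unit and associativity axioms for an action of the group object `M`),
such that the shear morphism `(τ, π_Z) : M ×_Y Z ⟶ Z ×_Y Z` is an isomorphism in `C/Y`. -/
structure BeckTorsor {C : Type u} [Category.{v} C] [HasPullbacks C] {Z Y : C} (γ : Z ⟶ Y) where
  mod : BeckModule Y
  effEpi : EffectiveEpi γ
  τ : pullback mod.φ γ ⟶ Z
  τ_γ : τ ≫ γ = pullback.snd mod.φ γ ≫ γ
  act_unit : ∀ {T : C} (z : T ⟶ Z),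
    pullback.lift (z ≫ γ ≫ mod.unit) z
        (by rw [Category.assoc, Category.assoc, mod.unit_φ, Category.comp_id]) ≫ τ = z
  act_assoc : ∀ {T : C} (a b : T ⟶ mod.M) (z : T ⟶ Z)
      (hab : a ≫ mod.φ = b ≫ mod.φ) (hbz : b ≫ mod.φ = z ≫ γ),
    pullback.lift (pullback.lift a b hab ≫ mod.add) z
        (by rw [Category.assoc, mod.add_φ, ← Category.assoc, pullback.lift_fst, hab, hbz]) ≫ τ =
      pullback.lift a (pullback.lift b z hbz ≫ τ)
        (by rw [Category.assoc, τ_γ, ← Category.assoc, pullback.lift_snd, hab, hbz]) ≫ τ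
  shear_iso : IsIso (pullback.lift τ (pullback.snd mod.φ γ) τ_γ :
    pullback mod.φ γ ⟶ pullback γ γ)

/-- An object `X` is formally unramified if, for every Beck torsor `γ : Z ⟶ Y` in `C`,
the canonical map `Hom(X, Z) → Hom(X, Y)` given by composition with `γ` is injective. -/
def FormallyUnramified {C : Type u} [Category.{v} C] [HasPullbacks C] (X : C) : Prop :=
  ∀ ⦃Z Y : C⦄ (γ : Z ⟶ Y), BeckTorsor γ →
    Function.Injective (fun ψ : X ⟶ Z => ψ ≫ γ)

/-- A morphism of Beck modules over `Y`: a morphism over `Y` commuting with the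
addition (i.e. a morphism of abelian group objects in `C/Y`). -/
@[ext]
structure BeckModuleHom {C : Type u} [Category.{v} C] [HasPullbacks C] {Y : C}
    (N₁ N₂ : BeckModule Y) where
  f : N₁.M ⟶ N₂.M
  w : f ≫ N₂.φ = N₁.φ
  map_add : ∀ {T : C} (a b : T ⟶ N₁.M) (h : a ≫ N₁.φ = b ≫ N₁.φ),
    (pullback.lift a b h ≫ N₁.add) ≫ f =
      pullback.lift (a ≫ f) (b ≫ f)
        (by rw [Category.assoc, Category.assoc, w, h]) ≫ N₂.add

/-- The category `Ab(C/Y)` of Beck modules over `Y`. -/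
instance BeckModule.category {C : Type u} [Category.{v} C] [HasPullbacks C] (Y : C) :
    Category (BeckModule Y) where
  Hom := BeckModuleHom
  id N := ⟨𝟙 N.M, Category.id_comp _, by intro T a b h; simp⟩
  comp {N₁ N₂ N₃} f g := ⟨f.f ≫ g.f, by rw [Category.assoc, g.w, f.w], by
    intro T a b h
    rw [← Category.assoc, f.map_add, g.map_add]
    simp⟩
  id_comp f := by apply BeckModuleHom.ext; simp
  comp_id f := by apply BeckModuleHom.ext; simp
  assoc f g h := by apply BeckModuleHom.ext; simp

/-- The forgetful functor `Ab(C/Y) ⥤ C/Y`. -/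
def forgetBeck {C : Type u} [Category.{v} C] [HasPullbacks C] (Y : C) :
    BeckModule Y ⥤ Over Y where
  obj N := Over.mk N.φ
  map {N₁ N₂} f := Over.homMk f.f f.w
  map_id N := by ext; simp; rfl
  map_comp f g := by ext; simp; rfl

set_option linter.unusedSimpArgs false

section Helpers

variable {C : Type u} [Category.{v} C] [HasPullbacks C]

theorem lift_congr_aux {A B Y T : C} {f : A ⟶ Y} {g : B ⟶ Y} {a a' : T ⟶ A} {b b' : T ⟶ B}
    (ha : a = a') (hb : b = b') (h : a ≫ f = b ≫ g) (h' : a' ≫ f = b' ≫ g) :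
    pullback.lift a b h = pullback.lift a' b' h' := by
  subst ha; subst hb; rfl

theorem comp_lift_aux {A B Y T S : C} {f : A ⟶ Y} {g : B ⟶ Y} {a : T ⟶ A} {b : T ⟶ B}
    (h : a ≫ f = b ≫ g) (s : S ⟶ T) :
    s ≫ pullback.lift a b h = pullback.lift (s ≫ a) (s ≫ b)
      (by rw [Category.assoc, Category.assoc, h]) := by
  ext <;> simp [pullback.lift_fst, pullback.lift_snd, pullback.lift_fst_assoc, pullback.lift_snd_assoc]

/-- The addition on the pulled back module. -/
noncomputable def pbAdd {Y X : C} (N : BeckModule Y) (f : X ⟶ Y) :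
    pullback (pullback.snd N.φ f) (pullback.snd N.φ f) ⟶ pullback N.φ f :=
  pullback.lift
    (pullback.lift (pullback.fst _ _ ≫ pullback.fst N.φ f) (pullback.snd _ _ ≫ pullback.fst N.φ f)
      (by rw [Category.assoc, Category.assoc, pullback.condition, ← Category.assoc,
            pullback.condition, Category.assoc]) ≫ N.add)
    (pullback.fst _ _ ≫ pullback.snd N.φ f)
    (by rw [Category.assoc, N.add_φ, pullback.lift_fst_assoc, Category.assoc, Category.assoc,
          pullback.condition])

theorem fst_cond_aux {Y X T : C} (N : BeckModule Y) (f : X ⟶ Y) (a b : T ⟶ pullback N.φ f)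
    (h : a ≫ pullback.snd N.φ f = b ≫ pullback.snd N.φ f) :
    (a ≫ pullback.fst N.φ f) ≫ N.φ = (b ≫ pullback.fst N.φ f) ≫ N.φ := by
  rw [Category.assoc, Category.assoc, pullback.condition, reassoc_of% h]

theorem lift_pbAdd_fst {Y X T : C} (N : BeckModule Y) (f : X ⟶ Y) (a b : T ⟶ pullback N.φ f)
    (h : a ≫ pullback.snd N.φ f = b ≫ pullback.snd N.φ f) :
    (pullback.lift a b h ≫ pbAdd N f) ≫ pullback.fst N.φ f =
      pullback.lift (a ≫ pullback.fst N.φ f) (b ≫ pullback.fst N.φ f)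
        (fst_cond_aux N f a b h) ≫ N.add := by
  rw [pbAdd, Category.assoc, pullback.lift_fst, ← Category.assoc, comp_lift_aux]
  congr 1
  apply lift_congr_aux <;> simp [pullback.lift_fst, pullback.lift_snd, pullback.lift_fst_assoc, pullback.lift_snd_assoc]

theorem lift_pbAdd_snd {Y X T : C} (N : BeckModule Y) (f : X ⟶ Y) (a b : T ⟶ pullback N.φ f)
    (h : a ≫ pullback.snd N.φ f = b ≫ pullback.snd N.φ f) :
    (pullback.lift a b h ≫ pbAdd N f) ≫ pullback.snd N.φ f = a ≫ pullback.snd N.φ f := by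
  simp [pullback.lift_fst, pullback.lift_snd, pullback.lift_fst_assoc, pullback.lift_snd_assoc, pbAdd]

/-- Base change of a Beck module. -/
noncomputable def pbModule {Y X : C} (N : BeckModule Y) (f : X ⟶ Y) : BeckModule X where
  M := pullback N.φ f
  φ := pullback.snd N.φ f
  unit := pullback.lift (f ≫ N.unit) (𝟙 X) (by simp [pullback.lift_fst, pullback.lift_snd, pullback.lift_fst_assoc, pullback.lift_snd_assoc, N.unit_φ])
  unit_φ := by simp [pullback.lift_fst, pullback.lift_snd, pullback.lift_fst_assoc, pullback.lift_snd_assoc]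
  add := pbAdd N f
  add_φ := by simp [pullback.lift_fst, pullback.lift_snd, pullback.lift_fst_assoc, pullback.lift_snd_assoc, pbAdd]
  neg := pullback.lift (pullback.fst _ _ ≫ N.neg) (pullback.snd _ _)
    (by rw [Category.assoc, N.neg_φ, pullback.condition])
  neg_φ := by simp [pullback.lift_fst, pullback.lift_snd, pullback.lift_fst_assoc, pullback.lift_snd_assoc]
  add_assoc a b c hab hbc := by
    apply pullback.hom_ext
    · refine (lift_pbAdd_fst _ _ _ _ _).trans (Eq.trans ?_ (lift_pbAdd_fst _ _ _ _ _).symm)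
      refine Eq.trans ?_ ((N.add_assoc _ _ _ (fst_cond_aux N f a b hab)
        (fst_cond_aux N f b c hbc)).trans ?_)
      · congr 1
        exact lift_congr_aux (lift_pbAdd_fst _ _ _ _ _) rfl _ _
      · congr 1
        exact lift_congr_aux rfl (lift_pbAdd_fst _ _ _ _ _).symm _ _
    · rw [lift_pbAdd_snd, lift_pbAdd_snd, lift_pbAdd_snd]
  add_comm a b h := by
    apply pullback.hom_ext
    · rw [lift_pbAdd_fst, lift_pbAdd_fst, N.add_comm]
    · rw [lift_pbAdd_snd, lift_pbAdd_snd, h]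
  zero_add a := by
    apply pullback.hom_ext
    · rw [lift_pbAdd_fst]
      refine Eq.trans ?_ (N.zero_add _)
      congr 1
      refine lift_congr_aux ?_ rfl _ _
      simp [pullback.lift_fst, pullback.lift_snd, pullback.lift_fst_assoc, pullback.lift_snd_assoc, pullback.condition_assoc]
    · rw [lift_pbAdd_snd]; simp [pullback.lift_fst, pullback.lift_snd, pullback.lift_fst_assoc, pullback.lift_snd_assoc]
  add_neg a := by
    apply pullback.hom_ext
    · rw [lift_pbAdd_fst]
      refine Eq.trans ?_ ((N.add_neg (a ≫ pullback.fst N.φ f)).trans ?_)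
      · congr 1
        refine lift_congr_aux rfl ?_ _ _
        simp [pullback.lift_fst, pullback.lift_snd, pullback.lift_fst_assoc, pullback.lift_snd_assoc]
      · simp [pullback.lift_fst, pullback.lift_snd, pullback.lift_fst_assoc, pullback.lift_snd_assoc, pullback.condition_assoc]
    · rw [lift_pbAdd_snd]; simp [pullback.lift_fst, pullback.lift_snd, pullback.lift_fst_assoc, pullback.lift_snd_assoc]

theorem section_unique {X : C} (Ω : Over X ⥤ BeckModule X) (adj : Ω ⊣ forgetBeck X)
    (hz : IsZero (Ω.obj (Over.mk (𝟙 X)))) (N : BeckModule X) (s t : X ⟶ N.M)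
    (hs : s ≫ N.φ = 𝟙 X) (ht : t ≫ N.φ = 𝟙 X) : s = t := by
  let s' : Over.mk (𝟙 X) ⟶ (forgetBeck X).obj N := Over.homMk s hs
  let t' : Over.mk (𝟙 X) ⟶ (forgetBeck X).obj N := Over.homMk t ht
  have h : s' = t' := (adj.homEquiv _ _).symm.injective (hz.eq_of_src _ _)
  exact congrArg (fun k => k.left) h

end Helpers

/-- If `C` has Kähler differentials (each forgetful functor `Ab(C/Y) ⥤ C/Y` has a
left adjoint `Ω`), and `Ω_X = Ω(𝟙 X)` is a zero object in `Ab(C/X)`, then `X` is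
formally unramified. -/
theorem formallyUnramified_of_isZero_kaehler {C : Type u} [Category.{v} C]
    [HasPullbacks C] (Ω : ∀ Y : C, Over Y ⥤ BeckModule Y)
    (adj : ∀ Y : C, Ω Y ⊣ forgetBeck Y) (X : C)
    (hz : IsZero ((Ω X).obj (Over.mk (𝟙 X)))) :
    FormallyUnramified X := by
  intro Z Y γ t ψ₁ ψ₂ h
  change ψ₁ ≫ γ = ψ₂ ≫ γ at h
  have := t.shear_iso
  let S := pullback.lift t.τ (pullback.snd t.mod.φ γ) t.τ_γ
  let p : X ⟶ pullback t.mod.φ γ := pullback.lift ψ₁ ψ₂ h ≫ inv S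
  have hp : p ≫ S = pullback.lift ψ₁ ψ₂ h := by simp [p]
  have h1 : p ≫ t.τ = ψ₁ := by
    have := congrArg (fun k => k ≫ pullback.fst γ γ) hp
    simpa [S, pullback.lift_fst, pullback.lift_snd, pullback.lift_fst_assoc, pullback.lift_snd_assoc] using this
  have h2 : p ≫ pullback.snd t.mod.φ γ = ψ₂ := by
    have := congrArg (fun k => k ≫ pullback.snd γ γ) hp
    simpa [S, pullback.lift_fst, pullback.lift_snd, pullback.lift_fst_assoc, pullback.lift_snd_assoc] using this
  have ha : (p ≫ pullback.fst t.mod.φ γ) ≫ t.mod.φ = 𝟙 X ≫ ψ₂ ≫ γ := by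
    rw [Category.assoc, pullback.condition, reassoc_of% h2, Category.id_comp]
  have hu : ((ψ₂ ≫ γ) ≫ t.mod.unit) ≫ t.mod.φ = 𝟙 X ≫ ψ₂ ≫ γ := by
    simp [pullback.lift_fst, pullback.lift_snd, pullback.lift_fst_assoc, pullback.lift_snd_assoc, t.mod.unit_φ]
  have key := section_unique (Ω X) (adj X) hz (pbModule t.mod (ψ₂ ≫ γ))
    (pullback.lift _ _ ha) (pullback.lift _ _ hu)
    (pullback.lift_snd _ _ _) (pullback.lift_snd _ _ _)
  have key2 : p ≫ pullback.fst t.mod.φ γ = (ψ₂ ≫ γ) ≫ t.mod.unit := by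
    have := congrArg (fun k => k ≫ pullback.fst t.mod.φ (ψ₂ ≫ γ)) key
    exact (pullback.lift_fst _ _ ha).symm.trans (this.trans (pullback.lift_fst _ _ hu))
  rw [← h1]
  refine Eq.trans ?_ (t.act_unit ψ₂)
  congr 1
  apply pullback.hom_ext
  · rw [key2, pullback.lift_fst, Category.assoc]
  · rw [h2, pullback.lift_snd]
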